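/- arXiv:1110.2021 — 3 statements merged into one kernel-verified Lean document; each statement's English description precedes it below -/
import Mathlib

section
/- Let F be a field, D a division ring that is an F-algebra, K a field that is an F-algebra, m ≥ 1 and n ≥ 1, and let φ : Mₘ(D) → Mₙ(K) be an F-algebra homomorphism of matrix rings. Then for every A ∈ Mₘ(D) and λ ∈ D, λ is a left eigenvalue of A (i.e., there exists a nonzero column vector v ∈ Dᵐ with A.mulVec v = λ • v, the scalar λ acting on the left) if and only if det(φ(A − λ • 1)) = 0. -/
theorem stmt_7 (F : Type*) [Field F] (D : Type*) [DivisionRing D] [Algebra F D]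
    (K : Type*) [Field K] [Algebra F K] (m n : ℕ) (hm : 1 ≤ m) (hn : 1 ≤ n)
    (φ : Matrix (Fin m) (Fin m) D →ₐ[F] Matrix (Fin n) (Fin n) K)
    (A : Matrix (Fin m) (Fin m) D) (lam : D) :
    (∃ v : Fin m → D, v ≠ 0 ∧ A.mulVec v = lam • v) ↔
      (φ (A - lam • (1 : Matrix (Fin m) (Fin m) D))).det = 0 := by
  have : Nonempty (Fin m) := ⟨⟨0, hm⟩⟩
  have : Nonempty (Fin n) := ⟨⟨0, hn⟩⟩
  have hB : ∀ v : Fin m → D, A.mulVec v = lam • v ↔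
      (A - lam • (1 : Matrix (Fin m) (Fin m) D)).mulVec v = 0 := by
    intro v
    rw [Matrix.sub_mulVec, Matrix.smul_mulVec, Matrix.one_mulVec, sub_eq_zero]
  simp only [hB]
  generalize A - lam • (1 : Matrix (Fin m) (Fin m) D) = B
  constructor
  · rintro ⟨v, hv, hBv⟩
    by_contra hdet
    have hinj : Function.Injective φ := RingHom.injective φ.toRingHom
    have hBV : B * Matrix.of (fun i (_ : Fin m) => v i) = 0 := by
      ext i j
      exact congrFun hBv i
    have h1 : φ B * φ (Matrix.of (fun i (_ : Fin m) => v i)) = 0 := by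
      rw [← map_mul, hBV, map_zero]
    have hu : IsUnit (φ B) := (Matrix.isUnit_iff_isUnit_det _).2 (isUnit_iff_ne_zero.2 hdet)
    have h2 := (hu.mul_right_eq_zero).1 h1
    have h3 := (map_eq_zero_iff φ hinj).1 h2
    apply hv
    ext i
    exact congrFun (congrFun h3 i) ⟨0, hm⟩
  · intro hdet
    by_contra! hno
    let f : (Fin m → D) →ₗ[Dᵐᵒᵖ] (Fin m → D) :=
      { toFun := B.mulVec
        map_add' := B.mulVec_add
        map_smul' := fun c v => B.mulVec_smul c v }
    have : Module.Finite Dᵐᵒᵖ D := ⟨⟨{1}, by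
      rw [eq_top_iff]
      intro x _
      simp only [Finset.coe_singleton]
      exact Submodule.mem_span_singleton.2 ⟨MulOpposite.op x, by simp⟩⟩⟩
    have hinj : Function.Injective f := by
      rw [injective_iff_map_eq_zero]
      intro v h
      by_contra hv
      exact hno v hv h
    have hsurj := LinearMap.injective_iff_surjective.1 hinj
    choose w hw using fun j : Fin m => hsurj (Pi.single j 1)
    have hBC : B * Matrix.of (fun i j => w j i) = 1 := by
      ext i j
      have := congrFun (hw j) i
      rw [Matrix.one_apply, ← Pi.single_apply]
      exact this
    have h1 := congrArg (fun M => (φ M).det) hBC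
    simp [hdet] at h1
end

section
/- Let D be a division ring, n ≥ 1, and let A, B, C, E be n × n matrices over D with C a unit of Mₙ(D). Let M be the 2n × 2n block matrix M = fromBlocks A B C E. Then for λ ∈ D, λ is a left eigenvalue of M (i.e., there exists a nonzero column vector v ∈ D²ⁿ with M.mulVec v = λ • v, the scalar λ acting on the left) if and only if there exists a nonzero column vector w ∈ Dⁿ with (C * (A − λ • 1) * C⁻¹ * (E − λ • 1) − C * B).mulVec w = 0. -/
theorem stmt_8 (D : Type*) [DivisionRing D] (n : ℕ) (hn : 1 ≤ n)
    (A B C E : Matrix (Fin n) (Fin n) D) (hC : IsUnit C) (lam : D) :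
    (∃ v : Fin n ⊕ Fin n → D, v ≠ 0 ∧
        (Matrix.fromBlocks A B C E).mulVec v = lam • v) ↔
      ∃ w : Fin n → D, w ≠ 0 ∧
        (C * (A - lam • (1 : Matrix (Fin n) (Fin n) D)) *
            (hC.unit⁻¹).val *
            (E - lam • (1 : Matrix (Fin n) (Fin n) D)) - C * B).mulVec w = 0 := by
  have h1 : (hC.unit⁻¹).val * C = 1 := hC.val_inv_mul
  have h2 : C * (hC.unit⁻¹).val = 1 := hC.mul_val_inv
  generalize (hC.unit⁻¹).val = K at h1 h2 ⊢
  have hl : ∀ (X : Matrix (Fin n) (Fin n) D) (y : Fin n → D),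
      (X - lam • (1 : Matrix (Fin n) (Fin n) D)).mulVec y = X.mulVec y - lam • y := by
    intro X y
    rw [Matrix.sub_mulVec, Matrix.smul_mulVec, Matrix.one_mulVec]
  have key : ∀ x y : Fin n → D,
      (Matrix.fromBlocks A B C E).mulVec (Sum.elim x y) = lam • Sum.elim x y ↔
      (A - lam • (1 : Matrix (Fin n) (Fin n) D)).mulVec x + B.mulVec y = 0 ∧
      C.mulVec x + (E - lam • (1 : Matrix (Fin n) (Fin n) D)).mulVec y = 0 := by
    intro x y
    have hs : lam • Sum.elim x y = Sum.elim (lam • x) (lam • y) := by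
      ext i; cases i <;> rfl
    rw [Matrix.fromBlocks_mulVec, hs, Sum.elim_eq_iff, hl, hl, Sum.elim_comp_inl,
      Sum.elim_comp_inr]
    constructor
    · rintro ⟨h, h'⟩
      exact ⟨by rw [← h]; abel, by rw [← h']; abel⟩
    · rintro ⟨h, h'⟩
      exact ⟨by rw [← sub_eq_zero, ← h]; abel, by rw [← sub_eq_zero, ← h']; abel⟩
  generalize A - lam • (1 : Matrix (Fin n) (Fin n) D) = P at key ⊢
  generalize E - lam • (1 : Matrix (Fin n) (Fin n) D) = Q at key ⊢
  have hexp : ∀ y : Fin n → D, (C * P * K * Q - C * B).mulVec y =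
      C.mulVec (P.mulVec (K.mulVec (Q.mulVec y)) - B.mulVec y) := by
    intro y
    simp only [Matrix.sub_mulVec, Matrix.mulVec_sub, Matrix.mulVec_mulVec, Matrix.mul_assoc]
  constructor
  · rintro ⟨v, hv, h⟩
    obtain ⟨x, y, rfl⟩ : ∃ x y, v = Sum.elim x y :=
      ⟨v ∘ Sum.inl, v ∘ Sum.inr, (Sum.elim_comp_inl_inr v).symm⟩
    obtain ⟨e1, e2⟩ := (key x y).1 h
    have hx : x = -K.mulVec (Q.mulVec y) := by
      have := congrArg K.mulVec e2
      rw [Matrix.mulVec_add, Matrix.mulVec_mulVec, h1, Matrix.one_mulVec,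
        Matrix.mulVec_zero] at this
      exact eq_neg_of_add_eq_zero_left this
    refine ⟨y, ?_, ?_⟩
    · rintro rfl
      apply hv
      rw [hx]
      ext i; cases i <;> simp
    · rw [hexp]
      rw [hx, Matrix.mulVec_neg] at e1
      have : P.mulVec (K.mulVec (Q.mulVec y)) - B.mulVec y = 0 := by
        rw [← neg_eq_zero, ← e1]; abel
      rw [this, Matrix.mulVec_zero]
  · rintro ⟨y, hy, h⟩
    rw [hexp] at h
    have h' := congrArg K.mulVec h
    rw [Matrix.mulVec_mulVec, h1, Matrix.one_mulVec, Matrix.mulVec_zero] at h'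
    refine ⟨Sum.elim (-K.mulVec (Q.mulVec y)) y, ?_, (key _ _).2 ⟨?_, ?_⟩⟩
    · intro h0
      apply hy
      ext i
      exact congrFun h0 (Sum.inr i)
    · rw [Matrix.mulVec_neg, ← neg_eq_zero, ← h']; abel
    · rw [Matrix.mulVec_neg, Matrix.mulVec_mulVec, h2, Matrix.one_mulVec, neg_add_cancel]
end

section
/- Let F be a field, c₁, c₂ ∈ F, and let Q = ℍ[F, c₁, c₂] be the quaternion algebra over F with structure constants c₁, c₂; assume every nonzero element of Q is a unit (Q is a division algebra). Let A, B, C, D be 2 × 2 matrices over Q with C a unit of M₂(Q), and let M = fromBlocks A B C D be the corresponding 4 × 4 matrix over Q. For λ ∈ Q, write the 2 × 2 matrix C * (A − λ • 1) * C⁻¹ * (D − λ • 1) − C * B as !![e, f; g, h] (so e, f, g, h ∈ Q depend on λ). Then λ is a left eigenvalue of M (i.e., there exists a nonzero column vector v ∈ Q⁴ with M.mulVec v = λ • v, the scalar λ acting on the left) if and only if either (e = 0 and f * g = 0) or (e ≠ 0 and e * (star e) * h − g * (star e) * f = 0). -/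
open Quaternion

theorem aux_kernel (F : Type*) [Field F] (c₁ c₂ : F)
    (hQ : ∀ q : ℍ[F, c₁, c₂], q ≠ 0 → IsUnit q) (e f g h : ℍ[F, c₁, c₂]) :
    (∃ a b : ℍ[F, c₁, c₂], ¬ (a = 0 ∧ b = 0) ∧ e * a + f * b = 0 ∧ g * a + h * b = 0) ↔
      ((e = 0 ∧ f * g = 0) ∨ (e ≠ 0 ∧ e * star e * h - g * star e * f = 0)) := by
  have hz : ∀ p q : ℍ[F, c₁, c₂], p ≠ 0 → p * q = 0 → q = 0 := fun p q hp hpq =>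
    ((hQ p hp).mul_right_eq_zero).1 hpq
  have hc : ∀ q : ℍ[F, c₁, c₂], e * star e * q = q * (e * star e) := by
    intro q
    rw [QuaternionAlgebra.mul_star_eq_coe]
    exact QuaternionAlgebra.coe_commutes _ _
  have hs : star e * e = e * star e := by
    exact star_comm_self' e
  constructor
  · rintro ⟨a, b, hab, h1, h2⟩
    by_cases he : e = 0
    · left
      refine ⟨he, ?_⟩
      subst he
      by_cases hf : f = 0
      · simp [hf]
      · have hb : b = 0 := hz f b hf (by simpa using h1)
        subst hb
        have ha : a ≠ 0 := fun ha => hab ⟨ha, rfl⟩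
        have hg : g = 0 := ((hQ a ha).mul_left_eq_zero).1 (by simpa using h2)
        simp [hg]
    · right
      refine ⟨he, ?_⟩
      have hb : b ≠ 0 := by
        rintro rfl
        exact hab ⟨hz e a he (by simpa using h1), rfl⟩
      refine ((hQ b hb).mul_left_eq_zero).1 ?_
      have h3 : f * b = -(e * a) := by rw [eq_neg_iff_add_eq_zero, add_comm]; exact h1
      calc (e * star e * h - g * star e * f) * b
          = e * star e * (h * b) - g * star e * (f * b) := by noncomm_ring
        _ = e * star e * (h * b) + g * (star e * e) * a := by rw [h3]; noncomm_ring
        _ = e * star e * (h * b) + (e * star e * g) * a := by rw [hs, hc g]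
        _ = e * star e * (g * a + h * b) := by noncomm_ring
        _ = 0 := by rw [h2, mul_zero]
  · rintro (⟨rfl, hfg⟩ | ⟨he, hh⟩)
    · by_cases hg : g = 0
      · exact ⟨1, 0, by simp, by simp, by simp [hg]⟩
      · have hf : f = 0 := ((hQ g hg).mul_left_eq_zero).1 hfg
        obtain ⟨u, rfl⟩ := hQ g hg
        exact ⟨-(u⁻¹.val * h), 1, by simp, by simp [hf], by simp⟩
    · refine ⟨-(star e * f), e * star e, ?_, ?_, ?_⟩
      · rintro ⟨-, h0⟩
        exact he (star_eq_zero.1 (hz e _ he h0))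
      · rw [← hc f]; noncomm_ring
      · rw [← hc h, ← hh]; noncomm_ring

theorem stmt_10 (F : Type*) [Field F] (c₁ c₂ : F)
    (hQ : ∀ q : ℍ[F, c₁, c₂], q ≠ 0 → IsUnit q)
    (A B C D : Matrix (Fin 2) (Fin 2) ℍ[F, c₁, c₂]) (hC : IsUnit C)
    (lam : ℍ[F, c₁, c₂]) (e f g h : ℍ[F, c₁, c₂])
    (heq : C * (A - lam • (1 : Matrix (Fin 2) (Fin 2) ℍ[F, c₁, c₂])) * (hC.unit⁻¹).val *
        (D - lam • (1 : Matrix (Fin 2) (Fin 2) ℍ[F, c₁, c₂])) - C * B = !![e, f; g, h]) :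
    (∃ v : Fin 2 ⊕ Fin 2 → ℍ[F, c₁, c₂], v ≠ 0 ∧
        (Matrix.fromBlocks A B C D).mulVec v = lam • v) ↔
      ((e = 0 ∧ f * g = 0) ∨ (e ≠ 0 ∧ e * star e * h - g * star e * f = 0)) := by
  rw [← aux_kernel F c₁ c₂ hQ e f g h]
  have hCi : C * (hC.unit⁻¹).val = 1 := hC.mul_val_inv
  have hiC : (hC.unit⁻¹).val * C = 1 := hC.val_inv_mul
  generalize (hC.unit⁻¹).val = K at *
  have hsub : ∀ (M : Matrix (Fin 2) (Fin 2) ℍ[F, c₁, c₂]) (x : Fin 2 → ℍ[F, c₁, c₂]),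
      (M - lam • (1 : Matrix (Fin 2) (Fin 2) ℍ[F, c₁, c₂])).mulVec x
        = M.mulVec x - lam • x := by
    intro M x
    rw [Matrix.sub_mulVec, Matrix.smul_mulVec, Matrix.one_mulVec]
  have hsplit : ∀ x y : Fin 2 → ℍ[F, c₁, c₂],
      (Matrix.fromBlocks A B C D).mulVec (Sum.elim x y) = lam • (Sum.elim x y) ↔
      ((A - lam • (1 : Matrix (Fin 2) (Fin 2) ℍ[F, c₁, c₂])).mulVec x + B.mulVec y = 0 ∧
       C.mulVec x + (D - lam • (1 : Matrix (Fin 2) (Fin 2) ℍ[F, c₁, c₂])).mulVec y = 0) := by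
    intro x y
    have hl : lam • (Sum.elim x y) = Sum.elim (lam • x) (lam • y) := by
      ext i : 1
      cases i <;> rfl
    rw [Matrix.fromBlocks_mulVec, hl, Sum.elim_eq_iff, hsub, hsub]
    simp only [Sum.elim_comp_inl, Sum.elim_comp_inr]
    rw [← sub_eq_zero, ← sub_eq_zero (b := lam • y)]
    rw [sub_add_eq_add_sub, add_sub_assoc (C.mulVec x)]
  generalize A - lam • (1 : Matrix (Fin 2) (Fin 2) ℍ[F, c₁, c₂]) = A' at *
  generalize D - lam • (1 : Matrix (Fin 2) (Fin 2) ℍ[F, c₁, c₂]) = D' at *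
  have hN : ∀ y : Fin 2 → ℍ[F, c₁, c₂], (C * A' * K * D' - C * B).mulVec y = 0 ↔
      e * y 0 + f * y 1 = 0 ∧ g * y 0 + h * y 1 = 0 := by
    intro y
    rw [heq]
    simp [funext_iff, Fin.forall_fin_two, Matrix.mulVec, dotProduct, Fin.sum_univ_two]
  constructor
  · rintro ⟨v, hv, hMv⟩
    obtain ⟨x, y, rfl⟩ : ∃ x y, v = Sum.elim x y :=
      ⟨v ∘ Sum.inl, v ∘ Sum.inr, (Sum.elim_comp_inl_inr v).symm⟩
    obtain ⟨h1, h2⟩ := (hsplit x y).1 hMv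
    have hx : x = -(K.mulVec (D'.mulVec y)) := by
      have := congrArg K.mulVec h2
      rw [Matrix.mulVec_add, Matrix.mulVec_mulVec, hiC, Matrix.one_mulVec,
        Matrix.mulVec_zero] at this
      exact eq_neg_of_add_eq_zero_left this
    refine ⟨y 0, y 1, ?_, (hN y).1 ?_⟩
    · rintro ⟨h0, h1'⟩
      have hy : y = 0 := by
        ext i : 1
        fin_cases i
        · exact h0
        · exact h1'
      apply hv
      rw [hx, hy]
      ext i : 1
      cases i <;> simp
    · have h3 := congrArg C.mulVec h1
      rw [hx] at h3
      simp only [Matrix.mulVec_add, Matrix.mulVec_neg, Matrix.mulVec_mulVec,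
        Matrix.mulVec_zero] at h3
      rw [Matrix.sub_mulVec, ← neg_eq_zero, neg_sub, ← h3]
      simp only [mul_assoc]
      abel
  · rintro ⟨a, b, hab, hk⟩
    have hy := (hN ![a, b]).2 (by simpa using hk)
    generalize hyd : ![a, b] = y at hy
    refine ⟨Sum.elim (-(K.mulVec (D'.mulVec y))) y, ?_, (hsplit _ _).2 ⟨?_, ?_⟩⟩
    · intro h0
      apply hab
      have h4 := congrFun h0 (Sum.inr 0)
      have h5 := congrFun h0 (Sum.inr 1)
      subst hyd
      exact ⟨by simpa using h4, by simpa using h5⟩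
    · have h3 := congrArg K.mulVec hy
      rw [Matrix.mulVec_mulVec, Matrix.mulVec_zero, mul_sub, Matrix.sub_mulVec] at h3
      simp only [mul_assoc] at h3
      rw [← mul_assoc K C, ← mul_assoc K C, hiC, one_mul, one_mul] at h3
      rw [← neg_eq_zero, ← h3]
      simp only [Matrix.mulVec_neg, Matrix.mulVec_mulVec, mul_assoc]
      abel
    · rw [Matrix.mulVec_neg, Matrix.mulVec_mulVec, hCi, Matrix.one_mulVec, neg_add_cancel]
end
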